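/- arXiv:0710.5184 — 4 statements merged into one kernel-verified Lean document; each statement's English description precedes it below -/
import Mathlib

section
/- Bilinear Wronskian identity (equation (E13) of Lemma 2). For all real φ and ϕ at which W(φ) ≠ 0 and W(ϕ) ≠ 0, one has ∑_{i=0}^m c_i · Ψ_i(φ) · Ψ_i(ϕ) · cos(k_i (φ − ϕ)) = 1. -/
/-- The Wronskian of a family of `n` real functions: the determinant of the
`n × n` matrix whose `(i, j)`-entry is the `j`-th derivative of the `i`-th function. -/
noncomputable def wronsk {n : ℕ} (f : Fin n → ℝ → ℝ) (t : ℝ) : ℝ :=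
  (Matrix.of fun i j : Fin n => iteratedDeriv (j : ℕ) (f i) t).det

/-- The functions `χ_i(φ) = cos(k_i φ + θ_i)`. -/
noncomputable def chiF (m : ℕ) (k : Fin (m + 1) → ℤ) (θ : Fin (m + 1) → ℝ)
    (i : Fin (m + 1)) : ℝ → ℝ :=
  fun φ => Real.cos ((k i : ℝ) * φ + θ i)

/-- `W(φ) = Wr[χ_0, …, χ_m](φ)`. -/
noncomputable def Wfn (m : ℕ) (k : Fin (m + 1) → ℤ) (θ : Fin (m + 1) → ℝ) : ℝ → ℝ :=
  wronsk (chiF m k θ)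

/-- `Ψ_i(φ) = Wr[χ_0, …, χ_{i-1}, χ_{i+1}, …, χ_m](φ) / W(φ)`. -/
noncomputable def PsiF (m : ℕ) (k : Fin (m + 1) → ℤ) (θ : Fin (m + 1) → ℝ)
    (i : Fin (m + 1)) : ℝ → ℝ :=
  fun φ => wronsk (fun j : Fin m => chiF m k θ (i.succAbove j)) φ / Wfn m k θ φ

/-- `c_i = ∏_{j ≠ i} (k_i² − k_j²)`. -/
noncomputable def cF (m : ℕ) (k : Fin (m + 1) → ℤ) (i : Fin (m + 1)) : ℝ :=
  ∏ j ∈ Finset.univ.erase i, ((k i : ℝ) ^ 2 - (k j : ℝ) ^ 2)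

/-- The Hadamard coefficients `U_ν` in polar coordinates:
`U_ν = ((−2)^ν/(rρ)^ν) ∑_i c_i Ψ_i(φ) Ψ_i(ϕ) T_{k_i}^{(ν)}(cos(φ − ϕ))`. -/
noncomputable def Ucoef (m : ℕ) (k : Fin (m + 1) → ℤ) (θ : Fin (m + 1) → ℝ)
    (ν : ℕ) (r φ ρ ϕ : ℝ) : ℝ :=
  ((-2 : ℝ) ^ ν / (r * ρ) ^ ν) *
    ∑ i, cF m k i * PsiF m k θ i φ * PsiF m k θ i ϕ *
      (Polynomial.derivative^[ν] (Polynomial.Chebyshev.T ℝ (k i))).eval (Real.cos (φ - ϕ))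

/-- The potential `V_k` in polar coordinates: `V_k = −(2/r²)·(d²/dφ²) log W(φ)`. -/
noncomputable def Vpot (m : ℕ) (k : Fin (m + 1) → ℤ) (θ : Fin (m + 1) → ℝ)
    (r φ : ℝ) : ℝ :=
  -(2 / r ^ 2) * deriv (deriv fun t => Real.log (Wfn m k θ t)) φ

/-- First partial derivative in the first variable. -/
noncomputable def pdx (f : ℝ × ℝ → ℝ) (x : ℝ × ℝ) : ℝ := deriv (fun s => f (s, x.2)) x.1

/-- First partial derivative in the second variable. -/
noncomputable def pdy (f : ℝ × ℝ → ℝ) (x : ℝ × ℝ) : ℝ := deriv (fun s => f (x.1, s)) x.2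

/-- The Laplacian on `ℝ²`. -/
noncomputable def lap2 (f : ℝ × ℝ → ℝ) (x : ℝ × ℝ) : ℝ := pdx (pdx f) x + pdy (pdy f) x

/-!
Put `w_i = (-1)^{i+m} Ψ_i`, the last row of the inverse of the Wronskian matrix, so that
`∑ i, w_i χ_i^{(j)} = δ_{jm}` for `j ≤ m`. As `χ_i'' = -k_i² χ_i`, these relations say that the
vectors `(w_i χ_i)` and `(w_i χ_i')` have vanishing low moments with respect to the nodes
`x_i = k_i²`. If the moments of order `< r` of a vector `u` on `N` nodes vanish, then
`u_i ∏_{j ≠ i} (x_i - x_j) = Q(x_i)` for a polynomial `Q` of degree less than `N - r`, so pairing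
`u` with a second vector whose low moments vanish leaves a single term.

Expanding `cos (k_i (φ - ϕ))` gives a cosine sum over all nodes and a sine sum, from which the node
`k_0 = 0` drops out; its factor `k_i² - k_0²` in `c_i` supplies the `k_i²` that turns two sines into
two derivatives. One of the sums is `1` and the other is `0`, according to the parity of `m`.
-/

section Moments

open Polynomial Lagrange

variable {R ι : Type*} [CommRing R] {s : Finset ι} {x u v : ι → R}

lemma sum_eval_mul_of_moments_eq_zero {Q : R[X]} {t : ℕ} (hQ : Q.natDegree ≤ t)
    (hv : ∀ p < t, ∑ i ∈ s, x i ^ p * v i = 0) :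
    ∑ i ∈ s, Q.eval (x i) * v i = Q.coeff t * ∑ i ∈ s, x i ^ t * v i := by
  calc ∑ i ∈ s, Q.eval (x i) * v i
      = ∑ p ∈ Finset.range (t + 1), Q.coeff p * ∑ i ∈ s, x i ^ p * v i := by
        simp only [eval_eq_sum_range' (Nat.lt_succ_of_le hQ), Finset.sum_mul, Finset.mul_sum,
          mul_assoc]
        exact Finset.sum_comm
    _ = Q.coeff t * ∑ i ∈ s, x i ^ t * v i := by
        rw [Finset.sum_range_succ, add_eq_right]
        exact Finset.sum_eq_zero fun p hp => by rw [hv p (Finset.mem_range.mp hp), mul_zero]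

variable [DecidableEq ι]

/-- The numerator of the partial fraction `∑ i ∈ s, u i / (X - x i)` over the common denominator
`nodal s x`; it interpolates the values `u i * ∏ j ∈ s.erase i, (x i - x j)` at the nodes without
requiring them to be distinct. -/
noncomputable def partialFractionNum (s : Finset ι) (x u : ι → R) : R[X] :=
  ∑ i ∈ s, C (u i) * nodal (s.erase i) x

lemma eval_partialFractionNum {i : ι} (hi : i ∈ s) :
    (partialFractionNum s x u).eval (x i) = u i * ∏ j ∈ s.erase i, (x i - x j) := by
  rw [partialFractionNum, eval_finsetSum, Finset.sum_eq_single_of_mem i hi]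
  · rw [eval_C_mul, eval_nodal]
  · intro j _ hji
    rw [eval_C_mul, eval_nodal_at_node (Finset.mem_erase.mpr ⟨hji.symm, hi⟩), mul_zero]

lemma coeff_nodal_erase {i : ι} (hi : i ∈ s) (n : ℕ) :
    (nodal (s.erase i) x).coeff n =
      ∑ l ∈ Finset.Icc (n + 1) (nodal s x).natDegree,
        x i ^ (l - (n + 1)) * (nodal s x).coeff l := by
  rw [← coeff_divByMonic_X_sub_C, nodal_eq_mul_nodal_erase hi,
    mul_divByMonic_cancel_left _ (monic_X_sub_C (x i))]

lemma coeff_partialFractionNum (n : ℕ) :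
    (partialFractionNum s x u).coeff n =
      ∑ l ∈ Finset.Icc (n + 1) (nodal s x).natDegree,
        (nodal s x).coeff l * ∑ i ∈ s, x i ^ (l - (n + 1)) * u i := by
  simp only [partialFractionNum, finsetSum_coeff, coeff_C_mul, Finset.mul_sum]
  rw [Finset.sum_comm]
  refine Finset.sum_congr rfl fun i hi => ?_
  rw [coeff_nodal_erase hi, Finset.mul_sum]
  exact Finset.sum_congr rfl fun l _ => by ring

lemma natDegree_partialFractionNum_le {r t : ℕ} (hs : s.card = r + t + 1)
    (hu : ∀ p < r, ∑ i ∈ s, x i ^ p * u i = 0) :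
    (partialFractionNum s x u).natDegree ≤ t := by
  nontriviality R
  refine natDegree_le_iff_coeff_eq_zero.mpr fun n hn => ?_
  rw [coeff_partialFractionNum, natDegree_nodal, hs]
  refine Finset.sum_eq_zero fun l hl => ?_
  rw [Finset.mem_Icc] at hl
  rw [hu _ (by omega), mul_zero]

lemma coeff_partialFractionNum_of_moments_eq_zero {r t : ℕ} (hs : s.card = r + t + 1)
    (hu : ∀ p < r, ∑ i ∈ s, x i ^ p * u i = 0) :
    (partialFractionNum s x u).coeff t = ∑ i ∈ s, x i ^ r * u i := by
  nontriviality R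
  have leading : (nodal s x).coeff (r + t + 1) = 1 := by
    rw [← hs, ← natDegree_nodal (v := x), nodal_monic.coeff_natDegree]
  rw [coeff_partialFractionNum, natDegree_nodal, hs,
    Finset.sum_eq_single_of_mem (r + t + 1) (Finset.mem_Icc.mpr (by omega)), leading, one_mul,
    show r + t + 1 - (t + 1) = r by omega]
  intro l hl hne
  rw [Finset.mem_Icc] at hl
  rw [hu _ (by omega), mul_zero]

lemma sum_prod_sub_mul_mul_of_moments_eq_zero {r t : ℕ} (hs : s.card = r + t + 1)
    (hu : ∀ p < r, ∑ i ∈ s, x i ^ p * u i = 0) (hv : ∀ p < t, ∑ i ∈ s, x i ^ p * v i = 0) :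
    ∑ i ∈ s, (∏ j ∈ s.erase i, (x i - x j)) * (u i * v i) =
      (∑ i ∈ s, x i ^ r * u i) * ∑ i ∈ s, x i ^ t * v i := by
  calc ∑ i ∈ s, (∏ j ∈ s.erase i, (x i - x j)) * (u i * v i)
      = ∑ i ∈ s, (partialFractionNum s x u).eval (x i) * v i :=
        Finset.sum_congr rfl fun i hi => by rw [eval_partialFractionNum hi]; ring
    _ = (∑ i ∈ s, x i ^ r * u i) * ∑ i ∈ s, x i ^ t * v i := by
        rw [sum_eval_mul_of_moments_eq_zero (natDegree_partialFractionNum_le hs hu) hv,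
          coeff_partialFractionNum_of_moments_eq_zero hs hu]

end Moments

lemma iteratedDeriv_two_mul_add_of_deriv_deriv_eq {𝕜 : Type*} [NontriviallyNormedField 𝕜]
    {f : 𝕜 → 𝕜} {c : 𝕜} (hf : deriv (deriv f) = fun t => c * f t) (p q : ℕ) (t : 𝕜) :
    iteratedDeriv (2 * p + q) f t = c ^ p * iteratedDeriv q f t := by
  induction p with
  | zero => rw [mul_zero, zero_add, pow_zero, one_mul]
  | succ p ih =>
    rw [show 2 * (p + 1) + q = 2 * p + q + 1 + 1 by ring, iteratedDeriv_succ', iteratedDeriv_succ',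
      hf, iteratedDeriv_const_mul_field, ih, pow_succ', mul_assoc]

section Wronskian

variable {n : ℕ} {f : Fin (n + 1) → ℝ → ℝ} {s t : ℝ}

/-- The quotient `Wr[f_0, …, f_{i-1}, f_{i+1}, …, f_n] / Wr[f_0, …, f_n]`, that is, `Ψ_i` for an
arbitrary family `f`. -/
noncomputable def wronskRatio (f : Fin (n + 1) → ℝ → ℝ) (i : Fin (n + 1)) (t : ℝ) : ℝ :=
  wronsk (fun j => f (i.succAbove j)) t / wronsk f t

lemma sum_wronsk_succAbove_mul_iteratedDeriv (f : Fin (n + 1) → ℝ → ℝ) (t : ℝ) {j : ℕ}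
    (hj : j ≤ n) :
    ∑ i : Fin (n + 1), (-1) ^ (i + n : ℕ) * wronsk (fun l => f (i.succAbove l)) t *
      iteratedDeriv j (f i) t = if j = n then wronsk f t else 0 := by
  set M : Matrix (Fin (n + 1)) (Fin (n + 1)) ℝ :=
    Matrix.of fun i j => iteratedDeriv (j : ℕ) (f i) t
  have adjugate_last (i : Fin (n + 1)) : M.adjugate (Fin.last n) i =
      (-1) ^ (i + n : ℕ) * wronsk (fun l => f (i.succAbove l)) t := by
    rw [Matrix.adjugate_fin_succ_eq_det_submatrix, Fin.succAbove_last]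
    rfl
  have last_row := congrFun₂ M.adjugate_mul (Fin.last n) ⟨j, Nat.lt_succ_of_le hj⟩
  simp only [Matrix.mul_apply, adjugate_last, Matrix.smul_apply, Matrix.one_apply, smul_eq_mul,
    mul_ite, mul_one, mul_zero, Fin.ext_iff, Fin.val_last, eq_comm (a := n)] at last_row
  exact last_row

lemma sum_wronskRatio_mul_iteratedDeriv (hf : wronsk f t ≠ 0) {j : ℕ} (hj : j ≤ n) :
    ∑ i : Fin (n + 1), (-1) ^ (i + n : ℕ) * wronskRatio f i t * iteratedDeriv j (f i) t =
      if j = n then 1 else 0 := by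
  simp only [wronskRatio, mul_div_assoc', div_mul_eq_mul_div]
  rw [← Finset.sum_div, sum_wronsk_succAbove_mul_iteratedDeriv f t hj, ite_div, div_self hf,
    zero_div]

variable {x : Fin (n + 1) → ℝ} {S : Finset (Fin (n + 1))} {q : ℕ}

lemma sum_pow_mul_wronskRatio_mul_iteratedDeriv
    (hode : ∀ i, deriv (deriv (f i)) = fun t => -x i * f i t) (hf : wronsk f t ≠ 0)
    (hS : ∀ i ∉ S, iteratedDeriv q (f i) t = 0) {p : ℕ} (hp : 2 * p + q ≤ n) :
    ∑ i ∈ S, x i ^ p * ((-1) ^ (i + n : ℕ) * wronskRatio f i t * iteratedDeriv q (f i) t) =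
      if 2 * p + q = n then (-1) ^ p else 0 := by
  have duality := sum_wronskRatio_mul_iteratedDeriv hf hp
  simp only [iteratedDeriv_two_mul_add_of_deriv_deriv_eq (hode _)] at duality
  have pow_eq (i : Fin (n + 1)) : x i ^ p = (-1) ^ p * (-x i) ^ p := by rw [← neg_pow, neg_neg]
  calc ∑ i ∈ S, x i ^ p * ((-1) ^ (i + n : ℕ) * wronskRatio f i t * iteratedDeriv q (f i) t)
      = ∑ i, x i ^ p * ((-1) ^ (i + n : ℕ) * wronskRatio f i t * iteratedDeriv q (f i) t) :=
        Finset.sum_subset S.subset_univ fun i _ hi => by rw [hS i hi, mul_zero, mul_zero]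
    _ = (-1) ^ p * ∑ i : Fin (n + 1), (-1) ^ (i + n : ℕ) * wronskRatio f i t *
          ((-x i) ^ p * iteratedDeriv q (f i) t) := by
        rw [Finset.mul_sum]
        exact Finset.sum_congr rfl fun i _ => by rw [pow_eq]; ring
    _ = if 2 * p + q = n then (-1) ^ p else 0 := by rw [duality, mul_ite, mul_one, mul_zero]

lemma sum_prod_sub_mul_wronskRatio_mul_iteratedDeriv
    (hode : ∀ i, deriv (deriv (f i)) = fun t => -x i * f i t)
    (hs : wronsk f s ≠ 0) (ht : wronsk f t ≠ 0) (hcard : S.card + q = n + 1)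
    (hSs : ∀ i ∉ S, iteratedDeriv q (f i) s = 0) (hSt : ∀ i ∉ S, iteratedDeriv q (f i) t = 0) :
    ∑ i ∈ S, (∏ j ∈ S.erase i, (x i - x j)) *
      ((wronskRatio f i s * iteratedDeriv q (f i) s) *
        (wronskRatio f i t * iteratedDeriv q (f i) t)) = if Odd S.card then 1 else 0 := by
  let dual (t : ℝ) (i : Fin (n + 1)) : ℝ :=
    (-1) ^ (i + n : ℕ) * wronskRatio f i t * iteratedDeriv q (f i) t
  have signs_cancel : ∑ i ∈ S, (∏ j ∈ S.erase i, (x i - x j)) *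
      ((wronskRatio f i s * iteratedDeriv q (f i) s) *
        (wronskRatio f i t * iteratedDeriv q (f i) t)) =
      ∑ i ∈ S, (∏ j ∈ S.erase i, (x i - x j)) * (dual s i * dual t i) :=
    Finset.sum_congr rfl fun i _ => by
      rcases neg_one_pow_eq_or ℝ (i + n : ℕ) with h | h <;> simp only [dual, h] <;> ring
  have moment_s {p : ℕ} (hp : 2 * p + q ≤ n) :
      ∑ i ∈ S, x i ^ p * dual s i = if 2 * p + q = n then (-1) ^ p else 0 :=
    sum_pow_mul_wronskRatio_mul_iteratedDeriv hode hs hSs hp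
  have moment_t {p : ℕ} (hp : 2 * p + q ≤ n) :
      ∑ i ∈ S, x i ^ p * dual t i = if 2 * p + q = n then (-1) ^ p else 0 :=
    sum_pow_mul_wronskRatio_mul_iteratedDeriv hode ht hSt hp
  rw [signs_cancel]
  rcases S.card.even_or_odd' with ⟨r, hr | hr⟩
  · rw [if_neg (Nat.not_odd_iff_even.mpr ⟨r, by omega⟩)]
    rcases r with _ | r
    · rw [Finset.card_eq_zero.mp hr, Finset.sum_empty]
    · -- The second factor has one more vanishing moment than the pairing requires.
      rw [sum_prod_sub_mul_mul_of_moments_eq_zero (r := r + 1) (t := r) (by omega)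
          (fun p hp => by rw [moment_s (by omega), if_neg (by omega)])
          (fun p hp => by rw [moment_t (by omega), if_neg (by omega)]),
        moment_t (by omega), if_neg (by omega), mul_zero]
  · rw [if_pos ⟨r, hr⟩, sum_prod_sub_mul_mul_of_moments_eq_zero (r := r) (t := r) (by omega)
        (fun p hp => by rw [moment_s (by omega), if_neg (by omega)])
        (fun p hp => by rw [moment_t (by omega), if_neg (by omega)]),
      moment_s (by omega), moment_t (by omega), if_pos (by omega), ← mul_pow, neg_mul_neg, one_mul,
      one_pow]

end Wronskian

section Cosines

/-- The cosines `cos (κ_i t + θ_i)` with real frequencies; the functions `χ_i` are the case of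
integer `κ_i`. -/
noncomputable def phasedCos {ι : Type*} (κ θ : ι → ℝ) (i : ι) (t : ℝ) : ℝ :=
  Real.cos (κ i * t + θ i)

lemma deriv_phasedCos {ι : Type*} (κ θ : ι → ℝ) (i : ι) :
    deriv (phasedCos κ θ i) = fun t => -κ i * Real.sin (κ i * t + θ i) := by
  funext t
  exact ((hasDerivAt_const_mul (κ i)).add_const (θ i)).cos.deriv.trans (by ring)

lemma deriv_deriv_phasedCos {ι : Type*} (κ θ : ι → ℝ) (i : ι) :
    deriv (deriv (phasedCos κ θ i)) = fun t => -κ i ^ 2 * phasedCos κ θ i t := by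
  rw [deriv_phasedCos]
  funext t
  rw [((((hasDerivAt_const_mul (κ i)).add_const (θ i)).sin).const_mul (-κ i)).deriv, phasedCos]
  ring

variable {m : ℕ} {κ θ : Fin (m + 1) → ℝ} {φ ϕ : ℝ}

lemma sum_prod_sub_mul_wronskRatio_mul_cos (hφ : wronsk (phasedCos κ θ) φ ≠ 0)
    (hϕ : wronsk (phasedCos κ θ) ϕ ≠ 0) :
    ∑ i, (∏ j ∈ Finset.univ.erase i, (κ i ^ 2 - κ j ^ 2)) *
      ((wronskRatio (phasedCos κ θ) i φ * Real.cos (κ i * φ + θ i)) *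
        (wronskRatio (phasedCos κ θ) i ϕ * Real.cos (κ i * ϕ + θ i))) =
      if Odd (m + 1) then 1 else 0 := by
  have pairing := sum_prod_sub_mul_wronskRatio_mul_iteratedDeriv (S := Finset.univ) (q := 0)
    (x := fun i => κ i ^ 2) (deriv_deriv_phasedCos κ θ) hφ hϕ (by simp) (by simp) (by simp)
  simpa only [iteratedDeriv_zero, phasedCos, Finset.card_univ, Fintype.card_fin] using pairing

lemma sum_prod_sub_mul_wronskRatio_mul_sin {i₀ : Fin (m + 1)} (hκ : κ i₀ = 0)
    (hθ : Real.sin (θ i₀) = 0) (hφ : wronsk (phasedCos κ θ) φ ≠ 0)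
    (hϕ : wronsk (phasedCos κ θ) ϕ ≠ 0) :
    ∑ i, (∏ j ∈ Finset.univ.erase i, (κ i ^ 2 - κ j ^ 2)) *
      ((wronskRatio (phasedCos κ θ) i φ * Real.sin (κ i * φ + θ i)) *
        (wronskRatio (phasedCos κ θ) i ϕ * Real.sin (κ i * ϕ + θ i))) =
      if Odd m then 1 else 0 := by
  have vanish (t : ℝ) : ∀ i ∉ Finset.univ.erase i₀, iteratedDeriv 1 (phasedCos κ θ i) t = 0 := by
    intro i hi
    obtain rfl : i = i₀ := by simpa using hi
    simp only [iteratedDeriv_one, deriv_phasedCos, hκ, neg_zero, zero_mul]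
  have card_nodes : (Finset.univ.erase i₀).card = m := by simp
  have pairing := sum_prod_sub_mul_wronskRatio_mul_iteratedDeriv
    (S := Finset.univ.erase i₀) (q := 1) (x := fun i => κ i ^ 2) (deriv_deriv_phasedCos κ θ) hφ hϕ
    (by rw [card_nodes]) (vanish φ) (vanish ϕ)
  rw [card_nodes] at pairing
  rw [← pairing, ← Finset.add_sum_erase _ _ (Finset.mem_univ i₀)]
  simp only [hκ, zero_mul, zero_add, hθ, mul_zero]
  refine Finset.sum_congr rfl fun i hi => ?_
  have factor : ∏ j ∈ Finset.univ.erase i, (κ i ^ 2 - κ j ^ 2) =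
      κ i ^ 2 * ∏ j ∈ (Finset.univ.erase i₀).erase i, (κ i ^ 2 - κ j ^ 2) := by
    rw [Finset.erase_right_comm, ← Finset.mul_prod_erase (Finset.univ.erase i) _
      (Finset.mem_erase.mpr ⟨(Finset.ne_of_mem_erase hi).symm, Finset.mem_univ i₀⟩), hκ,
      zero_pow two_ne_zero, sub_zero]
  rw [factor, iteratedDeriv_one, deriv_phasedCos]
  ring

theorem bilinear_wronskian_identity_general {i₀ : Fin (m + 1)} (hκ : κ i₀ = 0)
    (hθ : Real.sin (θ i₀) = 0) (hφ : wronsk (phasedCos κ θ) φ ≠ 0)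
    (hϕ : wronsk (phasedCos κ θ) ϕ ≠ 0) :
    ∑ i, (∏ j ∈ Finset.univ.erase i, (κ i ^ 2 - κ j ^ 2)) *
      wronskRatio (phasedCos κ θ) i φ * wronskRatio (phasedCos κ θ) i ϕ *
        Real.cos (κ i * (φ - ϕ)) = 1 := by
  have cos_expand (i : Fin (m + 1)) : Real.cos (κ i * (φ - ϕ)) =
      Real.cos (κ i * φ + θ i) * Real.cos (κ i * ϕ + θ i) +
        Real.sin (κ i * φ + θ i) * Real.sin (κ i * ϕ + θ i) := by
    rw [← Real.cos_sub]
    ring_nf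
  calc ∑ i, (∏ j ∈ Finset.univ.erase i, (κ i ^ 2 - κ j ^ 2)) *
        wronskRatio (phasedCos κ θ) i φ * wronskRatio (phasedCos κ θ) i ϕ * Real.cos (κ i * (φ - ϕ))
      = (if Odd (m + 1) then 1 else 0) + if Odd m then 1 else 0 := by
        rw [← sum_prod_sub_mul_wronskRatio_mul_cos hφ hϕ,
          ← sum_prod_sub_mul_wronskRatio_mul_sin hκ hθ hφ hϕ, ← Finset.sum_add_distrib]
        exact Finset.sum_congr rfl fun i _ => by rw [cos_expand]; ring
    _ = 1 := by by_cases hm : Odd m <;> simp [hm, Nat.odd_add_one]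

end Cosines

/-- **Equation (E13) of Lemma 2 (bilinear Wronskian identity).**
`∑_{i=0}^m c_i Ψ_i(φ) Ψ_i(ϕ) cos(k_i (φ − ϕ)) = 1`. -/
theorem bilinear_wronskian_identity (m : ℕ) (hm : 1 ≤ m)
    (k : Fin (m + 1) → ℤ) (hk0 : k 0 = 0) (hk : StrictMono k)
    (θ : Fin (m + 1) → ℝ) (hθ0 : θ 0 = 0)
    (φ ϕ : ℝ) (hWφ : Wfn m k θ φ ≠ 0) (hWϕ : Wfn m k θ ϕ ≠ 0) :
    ∑ i, cF m k i * PsiF m k θ i φ * PsiF m k θ i ϕ * Real.cos ((k i : ℝ) * (φ - ϕ))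
      = 1 := by
  exact bilinear_wronskian_identity_general (κ := fun i => k i) (i₀ := 0)
    (by rw [hk0, Int.cast_zero]) (by rw [hθ0, Real.sin_zero]) hWφ hWϕ
end

section
/- Wronskian quotient derivative identity (equation (Idd1)). Let m ≥ 0 and let f_0, …, f_{m+1} be smooth real functions on an open interval I. Denote by W the Wronskian Wr[f_0, …, f_{m+1}], by W_i the Wronskian of the list with f_i omitted, by W_{m+1} the Wronskian of the list with f_{m+1} omitted, and by W_{i,m+1} the Wronskian of the list with both f_i and f_{m+1} omitted. Then for each 0 ≤ i ≤ m and each φ ∈ I with W_{m+1}(φ) ≠ 0, one has (d/dφ)(W_i/W_{m+1})(φ) = W(φ)·W_{i,m+1}(φ)/W_{m+1}(φ)². -/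
/-!
Let `A` be the matrix of `W`, with one row per function and one column per order of derivative.
Differentiating a Wronskian column by column, every term but the last has two equal columns, so the
derivative is the same determinant with the last order of derivative raised by one. Hence `W_i`,
`W_{m+1}` and their derivatives are the four minors of `A` that omit row `i` or `m + 1` and column
`m` or `m + 1`, and the numerator in the quotient rule is evaluated by the Desnanot–Jacobi identity
for `A`.
-/

section Determinants

open Matrix

variable {ι R : Type*} [CommRing R] [DecidableEq ι]

theorem submatrix_updateCol_of_injective {κ l m α : Type*} [DecidableEq κ] (A : Matrix m ι α)
    (e : l → m) {g : κ → ι} (hg : Function.Injective g) (j : κ) (c : m → α) :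
    (A.updateCol (g j) c).submatrix e g = (A.submatrix e g).updateCol j (c ∘ e) := by
  ext i k
  simp [updateCol_apply, hg.eq_iff]

variable [Fintype ι]

theorem updateCol_mulVec {κ : Type*} (A : Matrix κ ι R) (p : ι) (u : κ → R) (w : ι → R) :
    A.updateCol p u *ᵥ w = A *ᵥ w + w p • (u - A.col p) := by
  ext i
  have hoff : ∑ j ∈ Finset.univ.erase p, A.updateCol p u i j * w j =
      ∑ j ∈ Finset.univ.erase p, A i j * w j :=
    Finset.sum_congr rfl fun j hj =>
      congrArg (· * w j) (updateCol_ne (Finset.ne_of_mem_erase hj))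
  simp only [mulVec, dotProduct, Pi.add_apply, Pi.smul_apply, Pi.sub_apply, smul_eq_mul, col_apply,
    ← Finset.add_sum_erase _ _ (Finset.mem_univ p), updateCol_self, hoff]
  ring

theorem det_updateCol_mulVec (A : Matrix ι ι R) (w : ι → R) (q : ι) :
    (A.updateCol q (A *ᵥ w)).det = w q * A.det := by
  have hw : A *ᵥ w = fun k => ∑ i, w i • A k i :=
    funext fun k => Finset.sum_congr rfl fun i _ => mul_comm _ _
  rw [hw, det_updateCol_sum, smul_eq_mul]

theorem det_updateCol_updateCol_col (A : Matrix ι ι R) {p q : ι} (hpq : p ≠ q) (u : ι → R) :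
    ((A.updateCol p u).updateCol q (A.col p)).det = -(A.updateCol q u).det := by
  have hswap : (A.updateCol p u).updateCol q (A.col p) =
      (A.updateCol q u).submatrix id (Equiv.swap p q) := by
    ext i j
    rcases eq_or_ne j q with rfl | hjq
    · simp [hpq]
    rcases eq_or_ne j p with rfl | hjp
    · simp [hpq]
    · simp [hjq, hjp, Equiv.swap_apply_of_ne_of_ne hjp hjq]
  rw [hswap, det_permute', Equiv.Perm.sign_swap hpq]
  simp

theorem det_mul_det_updateCol_updateCol (A : Matrix ι ι R) {p q : ι} (hpq : p ≠ q)
    (u v : ι → R) :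
    A.det * ((A.updateCol p u).updateCol q v).det =
      (A.updateCol p u).det * (A.updateCol q v).det -
        (A.updateCol p v).det * (A.updateCol q u).det := by
  set B := A.updateCol p u with hB
  set w := cramer A v with hw
  -- By Cramer's rule `det A • v = A *ᵥ w`, and `A` differs from `B` only in column `p`.
  have hv : A.det • v = B *ᵥ w + w p • (A.col p - u) := by
    rw [← mulVec_cramer A v, hB, updateCol_mulVec, ← neg_sub u, smul_neg, add_neg_cancel_right]
  have hu : (B.updateCol q u).det = 0 :=
    det_zero_of_column_eq hpq fun i => by simp [hB, hpq]
  calc A.det * (B.updateCol q v).det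
      = (B.updateCol q (B *ᵥ w + w p • (A.col p - u))).det := by rw [← hv, det_updateCol_smul]
    _ = w q * B.det + w p * ((B.updateCol q (A.col p)).det - (B.updateCol q u).det) := by
        rw [det_updateCol_add, det_updateCol_mulVec, det_updateCol_smul, sub_eq_add_neg,
          ← neg_one_smul R u, det_updateCol_add, det_updateCol_smul]
        ring
    _ = B.det * (A.updateCol q v).det - (A.updateCol p v).det * (A.updateCol q u).det := by
        rw [hu, det_updateCol_updateCol_col A hpq, hw, cramer_apply, cramer_apply]
        ring

theorem det_updateCol_single {n : ℕ} (A : Matrix (Fin (n + 1)) (Fin (n + 1)) R)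
    (i j : Fin (n + 1)) :
    (A.updateCol j (Pi.single i 1)).det =
      (-1) ^ (i + j : ℕ) * (A.submatrix i.succAbove j.succAbove).det := by
  rw [← cramer_apply, cramer_eq_adjugate_mulVec, mulVec_single_one, col_apply,
    adjugate_fin_succ_eq_det_submatrix]

theorem det_updateCol_single_updateCol_single {n : ℕ} (A : Matrix (Fin (n + 2)) (Fin (n + 2)) R)
    (r s : Fin (n + 2)) (i j : Fin (n + 1)) :
    ((A.updateCol (s.succAbove j) (Pi.single (r.succAbove i) 1)).updateCol s
        (Pi.single r 1)).det =
      (-1) ^ (r + s : ℕ) * ((-1) ^ (i + j : ℕ) *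
        (A.submatrix (r.succAbove ∘ i.succAbove) (s.succAbove ∘ j.succAbove)).det) := by
  have hsingle : (Pi.single (r.succAbove i) 1 : Fin (n + 2) → R) ∘ r.succAbove = Pi.single i 1 := by
    ext k
    simp [Pi.single_apply]
  rw [det_updateCol_single, submatrix_updateCol_of_injective A _ Fin.succAbove_right_injective,
    hsingle, det_updateCol_single, submatrix_submatrix]

theorem desnanot_jacobi {n : ℕ} (A : Matrix (Fin (n + 2)) (Fin (n + 2)) R) {r s : Fin (n + 2)}
    {i j : Fin (n + 1)} (hi : i.castSucc < r) (hj : j.castSucc < s) :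
    A.det * (A.submatrix (r.succAbove ∘ i.succAbove) (s.succAbove ∘ j.succAbove)).det =
      (A.submatrix i.castSucc.succAbove j.castSucc.succAbove).det *
          (A.submatrix r.succAbove s.succAbove).det -
        (A.submatrix i.castSucc.succAbove s.succAbove).det *
          (A.submatrix r.succAbove j.castSucc.succAbove).det := by
  have hminors := det_updateCol_single_updateCol_single A r s i j
  rw [Fin.succAbove_of_castSucc_lt r i hi, Fin.succAbove_of_castSucc_lt s j hj] at hminors
  have hplucker := det_mul_det_updateCol_updateCol A hj.ne (Pi.single i.castSucc 1) (Pi.single r 1)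
  simp only [hminors, det_updateCol_single, Fin.val_castSucc] at hplucker
  refine (isUnit_neg_one.pow (r + s + i + j : ℕ)).mul_left_cancel ?_
  linear_combination hplucker

end Determinants

section Derivatives

open Matrix

variable {𝕜 : Type*} [NontriviallyNormedField 𝕜]

theorem hasDerivAt_det {ι 𝔸 : Type*} [Fintype ι] [DecidableEq ι] [NormedCommRing 𝔸]
    [NormedAlgebra 𝕜 𝔸] {A : 𝕜 → Matrix ι ι 𝔸} {A' : Matrix ι ι 𝔸} {t : 𝕜}
    (hA : ∀ i j, HasDerivAt (fun s => A s i j) (A' i j) t) :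
    HasDerivAt (fun s => (A s).det) (∑ k, ((A t).updateCol k (A'.col k)).det) t := by
  simp only [det_apply']
  rw [Finset.sum_comm]
  refine HasDerivAt.fun_sum fun σ _ => ?_
  rw [← Finset.mul_sum]
  refine HasDerivAt.const_mul _ ?_
  convert HasDerivAt.fun_finsetProd (u := Finset.univ) fun i _ => hA (σ i) i using 1
  refine Finset.sum_congr rfl fun k _ => ?_
  rw [← Finset.prod_erase_mul _ _ (Finset.mem_univ k), updateCol_self, col_apply, smul_eq_mul]
  congr 1
  exact Finset.prod_congr rfl fun j hj => updateCol_ne (Finset.ne_of_mem_erase hj)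

theorem hasDerivAt_iteratedDeriv {F : Type*} [NormedAddCommGroup F] [NormedSpace 𝕜 F]
    {g : 𝕜 → F} {t : 𝕜} {n : WithTop ℕ∞} {k : ℕ} (hg : ContDiffAt 𝕜 n g t) (hk : k < n) :
    HasDerivAt (iteratedDeriv k g) (iteratedDeriv (k + 1) g t) t := by
  rw [iteratedDeriv_succ, hasDerivAt_deriv_iff, iteratedDeriv_eq_equiv_comp,
    LinearIsometryEquiv.comp_differentiableAt_iff]
  exact hg.differentiableAt_iteratedFDeriv hk

theorem hasDerivAt_wronsk {n : ℕ} {g : Fin (n + 1) → ℝ → ℝ} {t : ℝ}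
    (hg : ∀ i, ContDiffAt ℝ (n + 1) (g i) t) :
    HasDerivAt (wronsk g) (of fun i j : Fin (n + 1) =>
      iteratedDeriv ((Fin.last n).castSucc.succAbove j) (g i) t).det t := by
  set A : Matrix (Fin (n + 1)) (Fin (n + 1)) ℝ := of fun i j => iteratedDeriv j (g i) t
  set A' : Matrix (Fin (n + 1)) (Fin (n + 1)) ℝ := of fun i j => iteratedDeriv (j + 1) (g i) t
  have hdet : HasDerivAt (wronsk g) (∑ k, (A.updateCol k (A'.col k)).det) t :=
    hasDerivAt_det fun i j => hasDerivAt_iteratedDeriv (hg i) (by exact_mod_cast j.isLt)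
  have hrepeated (k : Fin n) : (A.updateCol k.castSucc (A'.col k.castSucc)).det = 0 :=
    det_zero_of_column_eq k.castSucc_lt_succ.ne fun i => by
      simp [A, A', updateCol_ne k.castSucc_lt_succ.ne']
  have hlast : A.updateCol (Fin.last n) (A'.col (Fin.last n)) =
      of fun i j => iteratedDeriv ((Fin.last n).castSucc.succAbove j) (g i) t := by
    ext i j
    refine Fin.lastCases ?_ (fun j => ?_) j
    · simp [A']
    · simp [A, Fin.succAbove_of_castSucc_lt, Fin.castSucc_lt_last]
  rwa [Fin.sum_univ_castSucc, Finset.sum_eq_zero fun k _ => hrepeated k, zero_add, hlast] at hdet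

end Derivatives

theorem wronskian_quotient_deriv_general {m : ℕ} {f : Fin (m + 2) → ℝ → ℝ} {φ : ℝ}
    (hf : ∀ i, ContDiffAt ℝ (m + 1) (f i) φ) (i : Fin (m + 1))
    (hW : wronsk (fun j : Fin (m + 1) => f j.castSucc) φ ≠ 0) :
    HasDerivAt (fun t => wronsk (fun j : Fin (m + 1) => f (i.castSucc.succAbove j)) t /
        wronsk (fun j : Fin (m + 1) => f j.castSucc) t)
      (wronsk f φ * wronsk (fun j : Fin m => f (i.succAbove j).castSucc) φ /
        (wronsk (fun j : Fin (m + 1) => f j.castSucc) φ) ^ 2) φ := by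
  have hjacobi := desnanot_jacobi (Matrix.of fun i j : Fin (m + 2) => iteratedDeriv j (f i) φ)
    i.castSucc_lt_last (Fin.last m).castSucc_lt_last
  simp only [Fin.succAbove_last] at hjacobi
  exact ((hasDerivAt_wronsk fun j => hf (i.castSucc.succAbove j)).fun_div
    (hasDerivAt_wronsk fun j => hf j.castSucc) hW).congr_deriv
      (congrArg (· / wronsk (fun j : Fin (m + 1) => f j.castSucc) φ ^ 2) hjacobi.symm)

/-- **Equation (Idd1): Wronskian quotient derivative identity.** For smooth functions
`f_0, …, f_{m+1}` on an open interval, `(W_i/W_{m+1})' = W · W_{i,m+1} / W_{m+1}²`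
wherever `W_{m+1} ≠ 0`, where `W` is the full Wronskian, `W_i` omits `f_i`,
`W_{m+1}` omits `f_{m+1}`, and `W_{i,m+1}` omits both. -/
theorem wronskian_quotient_deriv (m : ℕ) (a b : ℝ) (f : Fin (m + 2) → ℝ → ℝ)
    (hf : ∀ i, ContDiffOn ℝ (⊤ : ℕ∞) (f i) (Set.Ioo a b))
    (i : Fin (m + 1)) (φ : ℝ) (hφ : φ ∈ Set.Ioo a b)
    (hW : wronsk (fun j : Fin (m + 1) => f j.castSucc) φ ≠ 0) :
    deriv (fun t => wronsk (fun j : Fin (m + 1) => f (i.castSucc.succAbove j)) t /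
        wronsk (fun j : Fin (m + 1) => f j.castSucc) t) φ
      = wronsk f φ * wronsk (fun j : Fin m => f (i.succAbove j).castSucc) φ /
          (wronsk (fun j : Fin (m + 1) => f j.castSucc) φ) ^ 2 := by
  have hsmooth (j : Fin (m + 2)) : ContDiffAt ℝ (m + 1) (f j) φ :=
    ((hf j).contDiffAt (isOpen_Ioo.mem_nhds hφ)).of_le (by exact_mod_cast le_top)
  exact (wronskian_quotient_deriv_general hsmooth i hW).deriv
end

section
/- Integration of the first-order PDE (equation (pde) to (F)). Let I ⊆ ℝ be an open interval, let g : I → ℝ be differentiable and nowhere zero, and let S : I × I → ℝ be a differentiable function satisfying −(∂S/∂φ(φ,ϕ) + ∂S/∂ϕ(φ,ϕ)) + (g'(φ)/g(φ) + g'(ϕ)/g(ϕ))·S(φ,ϕ) = g'(φ)/g(φ) + g'(ϕ)/g(ϕ) for all (φ, ϕ) ∈ I × I. Then there exists a function F of one real variable such that S(φ, ϕ) = 1 + F(φ − ϕ)·g(φ)·g(ϕ) for all (φ, ϕ) ∈ I × I. -/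
/-!
The equation says that `S - 1` and `(φ, ϕ) ↦ g φ * g ϕ` solve the same homogeneous linear transport
equation along the direction `(1, 1)`. Hence their quotient has zero derivative along `(1, 1)` and
is constant, by the mean value theorem, on each segment `φ - ϕ = const` of the square
`I × I`.
-/

theorem exists_eq_comp_linearMap_of_ker_le_ker_fderivWithin {E G : Type*}
    [NormedAddCommGroup E] [NormedSpace ℝ E] [AddCommGroup G] [Module ℝ G]
    {U : Set E} (hU : Convex ℝ U) {f : E → ℝ} {f' : E → E →L[ℝ] ℝ}
    (hf : ∀ x ∈ U, HasFDerivWithinAt f (f' x) U x) (L : E →ₗ[ℝ] G)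
    (hker : ∀ x ∈ U, ∀ v, L v = 0 → f' x v = 0) :
    ∃ F : G → ℝ, ∀ x ∈ U, f x = F (L x) := by
  have hfactors : (U.domRestrict f).FactorsThrough (U.domRestrict L) := by
    rintro ⟨x, hx⟩ ⟨y, hy⟩ (hxy : L x = L y)
    obtain ⟨z, hz, hmean⟩ := domain_mvt hf hU hx hy
    have hzero : f' z (y - x) = 0 :=
      hker z (hU.segment_subset hx hy hz) _ (by rw [map_sub, hxy, sub_self])
    exact (sub_eq_zero.mp (hmean.trans hzero)).symm
  obtain ⟨F, hF⟩ := (Function.factorsThrough_iff _).mp hfactors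
  exact ⟨F, fun x hx => congrFun hF ⟨x, hx⟩⟩

theorem hasFDerivAt_fun_div {𝕜 E : Type*} [NontriviallyNormedField 𝕜] [NormedAddCommGroup E]
    [NormedSpace 𝕜 E] {u h : E → 𝕜} {u' h' : E →L[𝕜] 𝕜} {x : E} (hu : HasFDerivAt u u' x)
    (hh : HasFDerivAt h h' x) (h0 : h x ≠ 0) :
    HasFDerivAt (fun y => u y / h y) ((h x ^ 2)⁻¹ • (h x • u' - u x • h')) x := by
  simp only [div_eq_mul_inv]
  refine (hu.mul ((hasDerivAt_inv h0).comp_hasFDerivAt x hh)).congr_fderiv ?_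
  ext v
  simp only [add_apply, sub_apply, smul_apply, smul_eq_mul, Function.comp_apply]
  field_simp
  ring

theorem pdx_eq_fderiv {f : ℝ × ℝ → ℝ} {p : ℝ × ℝ} (hf : DifferentiableAt ℝ f p) :
    pdx f p = fderiv ℝ f p (1, 0) :=
  (hf.hasFDerivAt.comp_hasDerivAt p.1
    ((hasDerivAt_id p.1).prodMk (hasDerivAt_const p.1 p.2))).deriv

theorem pdy_eq_fderiv {f : ℝ × ℝ → ℝ} {p : ℝ × ℝ} (hf : DifferentiableAt ℝ f p) :
    pdy f p = fderiv ℝ f p (0, 1) :=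
  (hf.hasFDerivAt.comp_hasDerivAt p.2
    ((hasDerivAt_const p.2 p.1).prodMk (hasDerivAt_id p.2))).deriv

theorem fderiv_apply_one_one {f : ℝ × ℝ → ℝ} {p : ℝ × ℝ} (hf : DifferentiableAt ℝ f p) :
    fderiv ℝ f p (1, 1) = pdx f p + pdy f p := by
  rw [pdx_eq_fderiv hf, pdy_eq_fderiv hf, ← map_add, Prod.mk_add_mk, add_zero, zero_add]

theorem pdx_sub_const (f : ℝ × ℝ → ℝ) (c : ℝ) (p : ℝ × ℝ) :
    pdx (fun q => f q - c) p = pdx f p :=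
  deriv_sub_const c

theorem pdy_sub_const (f : ℝ × ℝ → ℝ) (c : ℝ) (p : ℝ × ℝ) :
    pdy (fun q => f q - c) p = pdy f p :=
  deriv_sub_const c

theorem pdx_mul_fst_snd (g k : ℝ → ℝ) (p : ℝ × ℝ) :
    pdx (fun q => g q.1 * k q.2) p = deriv g p.1 * k p.2 :=
  deriv_mul_const_field (k p.2)

theorem pdy_mul_fst_snd (g k : ℝ → ℝ) (p : ℝ × ℝ) :
    pdy (fun q => g q.1 * k q.2) p = g p.1 * deriv k p.2 :=
  deriv_const_mul_field (g p.1)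

theorem exists_eq_comp_sub_of_fderivWithin_apply_one_one_eq_zero {U : Set (ℝ × ℝ)}
    (hU : Convex ℝ U) {f : ℝ × ℝ → ℝ} {f' : ℝ × ℝ → ℝ × ℝ →L[ℝ] ℝ}
    (hf : ∀ p ∈ U, HasFDerivWithinAt f (f' p) U p) (hzero : ∀ p ∈ U, f' p (1, 1) = 0) :
    ∃ F : ℝ → ℝ, ∀ p ∈ U, f p = F (p.1 - p.2) := by
  refine exists_eq_comp_linearMap_of_ker_le_ker_fderivWithin hU hf
    (LinearMap.fst ℝ ℝ ℝ - LinearMap.snd ℝ ℝ ℝ) ?_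
  rintro p hp ⟨s, t⟩ hker
  obtain rfl : s = t := sub_eq_zero.mp hker
  have hdiag : ((s, s) : ℝ × ℝ) = s • (1, 1) := by simp only [Prod.smul_mk, smul_eq_mul, mul_one]
  rw [hdiag, map_smul, hzero p hp, smul_zero]

theorem exists_eq_comp_sub_mul_of_pdx_add_pdy_mul_eq {U : Set (ℝ × ℝ)} (hU : Convex ℝ U)
    {u h : ℝ × ℝ → ℝ}
    (hu : ∀ p ∈ U, DifferentiableAt ℝ u p) (hh : ∀ p ∈ U, DifferentiableAt ℝ h p)
    (h0 : ∀ p ∈ U, h p ≠ 0)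
    (hpde : ∀ p ∈ U, h p * (pdx u p + pdy u p) = u p * (pdx h p + pdy h p)) :
    ∃ F : ℝ → ℝ, ∀ p ∈ U, u p = F (p.1 - p.2) * h p := by
  have hquot (p) (hp : p ∈ U) :=
    hasFDerivAt_fun_div (hu p hp).hasFDerivAt (hh p hp).hasFDerivAt (h0 p hp)
  obtain ⟨F, hF⟩ := exists_eq_comp_sub_of_fderivWithin_apply_one_one_eq_zero hU
    (fun p hp => (hquot p hp).hasFDerivWithinAt) fun p hp => by
      simp only [smul_apply, sub_apply, smul_eq_mul, fderiv_apply_one_one (hu p hp),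
        fderiv_apply_one_one (hh p hp), hpde p hp, sub_self, mul_zero]
  exact ⟨F, fun p hp => (div_eq_iff (h0 p hp)).mp (hF p hp)⟩

theorem integrate_first_order_pde_general {I : Set ℝ} (hI : Convex ℝ I) (g : ℝ → ℝ)
    (hg : ∀ φ ∈ I, DifferentiableAt ℝ g φ) (hg0 : ∀ φ ∈ I, g φ ≠ 0) (S : ℝ × ℝ → ℝ)
    (hS : ∀ p ∈ I ×ˢ I, DifferentiableAt ℝ S p)
    (hpde : ∀ φ ∈ I, ∀ ϕ ∈ I,
      -(pdx S (φ, ϕ) + pdy S (φ, ϕ)) + (deriv g φ / g φ + deriv g ϕ / g ϕ) * S (φ, ϕ)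
        = deriv g φ / g φ + deriv g ϕ / g ϕ) :
    ∃ F : ℝ → ℝ, ∀ φ ∈ I, ∀ ϕ ∈ I, S (φ, ϕ) = 1 + F (φ - ϕ) * g φ * g ϕ := by
  obtain ⟨F, hF⟩ := exists_eq_comp_sub_mul_of_pdx_add_pdy_mul_eq (hI.prod hI)
    (u := fun p => S p - 1) (h := fun p => g p.1 * g p.2)
    (fun p hp => (hS p hp).sub_const 1)
    (fun p hp => ((hg p.1 hp.1).comp p differentiableAt_fst).mul
      ((hg p.2 hp.2).comp p differentiableAt_snd))
    (fun p hp => mul_ne_zero (hg0 p.1 hp.1) (hg0 p.2 hp.2))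
    fun ⟨φ, ϕ⟩ ⟨hφ, hϕ⟩ => by
      have hφ0 := hg0 φ hφ
      have hϕ0 := hg0 ϕ hϕ
      have htransport : pdx S (φ, ϕ) + pdy S (φ, ϕ) =
          (deriv g φ / g φ + deriv g ϕ / g ϕ) * (S (φ, ϕ) - 1) := by
        linear_combination -hpde φ hφ ϕ hϕ
      rw [pdx_sub_const, pdy_sub_const, pdx_mul_fst_snd, pdy_mul_fst_snd, htransport]
      field_simp
  exact ⟨F, fun φ hφ ϕ hϕ => by linear_combination hF (φ, ϕ) ⟨hφ, hϕ⟩⟩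

/-- **Integration of the first-order PDE (equation (pde) to (F)).** If `g` is
differentiable and nowhere zero on an open interval `I`, and `S` is differentiable on
`I × I` and satisfies `−(S_φ + S_ϕ) + (g'/g(φ) + g'/g(ϕ)) S = g'/g(φ) + g'/g(ϕ)`,
then `S(φ, ϕ) = 1 + F(φ − ϕ) g(φ) g(ϕ)` for some function `F` of one variable. -/
theorem integrate_first_order_pde (a b : ℝ) (g : ℝ → ℝ)
    (hg : ∀ φ ∈ Set.Ioo a b, DifferentiableAt ℝ g φ)
    (hg0 : ∀ φ ∈ Set.Ioo a b, g φ ≠ 0)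
    (S : ℝ × ℝ → ℝ)
    (hS : ∀ p ∈ Set.Ioo a b ×ˢ Set.Ioo a b, DifferentiableAt ℝ S p)
    (hpde : ∀ φ ∈ Set.Ioo a b, ∀ ϕ ∈ Set.Ioo a b,
      -(pdx S (φ, ϕ) + pdy S (φ, ϕ)) +
          (deriv g φ / g φ + deriv g ϕ / g ϕ) * S (φ, ϕ)
        = deriv g φ / g φ + deriv g ϕ / g ϕ) :
    ∃ F : ℝ → ℝ, ∀ φ ∈ Set.Ioo a b, ∀ ϕ ∈ Set.Ioo a b,
      S (φ, ϕ) = 1 + F (φ - ϕ) * g φ * g ϕ :=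
  integrate_first_order_pde_general (convex_Ioo a b) g hg hg0 S hS hpde
end

section
/- Generating identity for the Hadamard coefficients (equations (E10), (E14), (E88)). For x = (r cos φ, r sin φ) and ξ = (ρ cos ϕ, ρ sin ϕ) with r > 0, ρ > 0, W(φ) ≠ 0 and W(ϕ) ≠ 0, set γ := |x − ξ|² = r² + ρ² − 2rρ cos(φ − ϕ). Then ∑_{i=0}^m c_i Ψ_i(φ) Ψ_i(ϕ) T_{k_i}((r/ρ + ρ/r)/2) = ∑_{ν=0}^{k_m} (1/((−4)^ν · ν!)) · U_ν(x, ξ) · γ^ν. -/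
/-!
If `x` and `ξ` have polar coordinates `(r, φ)` and `(ρ, ϕ)`, the law of cosines for `γ = |x - ξ|²`
reads `(r / ρ + ρ / r) / 2 = cos (φ - ϕ) + γ / (2 * r * ρ)`. The identity is the Taylor expansion
of the polynomial `∑ i, c_i Ψ_i(φ) Ψ_i(ϕ) T_{k_i}`, of degree at most `k_m`, at `cos (φ - ϕ)`
with this increment.
-/

open Polynomial

theorem eval_iterate_derivative_eq_factorial_mul_taylor_coeff {R : Type*} [Semiring R]
    (p : R[X]) (c : R) (n : ℕ) :
    (derivative^[n] p).eval c = n.factorial * (taylor c p).coeff n := by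
  rw [taylor_coeff, ← factorial_smul_hasseDeriv, LinearMap.smul_apply, eval_smul, nsmul_eq_mul]

theorem eval_add_eq_sum_iterate_derivative {K : Type*} [Semifield K] [CharZero K]
    {p : K[X]} {N : ℕ} (hp : p.natDegree < N) (c t : K) :
    p.eval (c + t) =
      ∑ n ∈ Finset.range N, (derivative^[n] p).eval c / n.factorial * t ^ n := by
  calc p.eval (c + t) = (taylor c p).eval t := by rw [taylor_eval, add_comm]
    _ = ∑ n ∈ Finset.range N, (taylor c p).coeff n * t ^ n :=
      eval_eq_sum_range' (by rwa [natDegree_taylor]) t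
    _ = _ := Finset.sum_congr rfl fun n _ => by
      rw [eval_iterate_derivative_eq_factorial_mul_taylor_coeff,
        mul_div_cancel_left₀ _ (Nat.cast_ne_zero.mpr n.factorial_ne_zero)]

theorem half_div_add_div_eq_add {K : Type*} [Field K] [NeZero (2 : K)] {r ρ : K}
    (hr : r ≠ 0) (hρ : ρ ≠ 0) (c : K) :
    (r / ρ + ρ / r) / 2 = c + (r ^ 2 + ρ ^ 2 - 2 * r * ρ * c) / (2 * (r * ρ)) := by
  field_simp
  ring

section

variable {K : Type*} [Field K] [CharZero K] {r ρ : K}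

theorem eval_half_div_add_div {p : K[X]} {N : ℕ} (hp : p.natDegree < N)
    (hr : r ≠ 0) (hρ : ρ ≠ 0) (c : K) :
    p.eval ((r / ρ + ρ / r) / 2) =
      ∑ ν ∈ Finset.range N,
        (1 / ((-4) ^ ν * ν.factorial)) *
          ((-2) ^ ν / (r * ρ) ^ ν * (derivative^[ν] p).eval c) *
          (r ^ 2 + ρ ^ 2 - 2 * r * ρ * c) ^ ν := by
  rw [half_div_add_div_eq_add hr hρ c, eval_add_eq_sum_iterate_derivative hp]
  refine Finset.sum_congr rfl fun ν _ => ?_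
  generalize r ^ 2 + ρ ^ 2 - 2 * r * ρ * c = γ
  have hscale : (γ / (2 * (r * ρ))) ^ ν = (-2) ^ ν / (-4) ^ ν / (r * ρ) ^ ν * γ ^ ν := by
    simp only [← div_pow, ← mul_pow]
    congr 1
    field_simp
    norm_num
  rw [hscale]
  ring

theorem generating_identity_general {ι : Type*} {s : Finset ι} {p : ι → K[X]} {N : ℕ}
    (hp : ∀ i ∈ s, (p i).natDegree < N) (w : ι → K) (hr : r ≠ 0) (hρ : ρ ≠ 0) (c : K) :
    ∑ i ∈ s, w i * (p i).eval ((r / ρ + ρ / r) / 2) =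
      ∑ ν ∈ Finset.range N,
        (1 / ((-4) ^ ν * ν.factorial)) *
          ((-2) ^ ν / (r * ρ) ^ ν * ∑ i ∈ s, w i * (derivative^[ν] (p i)).eval c) *
          (r ^ 2 + ρ ^ 2 - 2 * r * ρ * c) ^ ν := by
  rw [Finset.sum_congr rfl fun i hi => by rw [eval_half_div_add_div (hp i hi) hr hρ c]]
  simp only [Finset.mul_sum, Finset.sum_mul]
  rw [Finset.sum_comm]
  exact Finset.sum_congr rfl fun ν _ => Finset.sum_congr rfl fun i _ => by ring

end

/-- **Generating identity for the Hadamard coefficients (equations (E10), (E14), (E88)).**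
With `γ = r² + ρ² − 2rρ cos(φ − ϕ)`,
`∑_i c_i Ψ_i(φ) Ψ_i(ϕ) T_{k_i}((r/ρ + ρ/r)/2) = ∑_{ν=0}^{k_m} U_ν γ^ν /((−4)^ν ν!)`. -/
theorem generating_identity (m : ℕ) (hm : 1 ≤ m)
    (k : Fin (m + 1) → ℤ) (hk0 : k 0 = 0) (hk : StrictMono k)
    (θ : Fin (m + 1) → ℝ) (hθ0 : θ 0 = 0)
    (r φ ρ ϕ : ℝ) (hr : 0 < r) (hρ : 0 < ρ)
    (hWφ : Wfn m k θ φ ≠ 0) (hWϕ : Wfn m k θ ϕ ≠ 0) :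
    ∑ i, cF m k i * PsiF m k θ i φ * PsiF m k θ i ϕ *
        (Polynomial.Chebyshev.T ℝ (k i)).eval ((r / ρ + ρ / r) / 2)
      = ∑ ν ∈ Finset.range ((k (Fin.last m)).toNat + 1),
          (1 / ((-4 : ℝ) ^ ν * (Nat.factorial ν))) * Ucoef m k θ ν r φ ρ ϕ *
            (r ^ 2 + ρ ^ 2 - 2 * r * ρ * Real.cos (φ - ϕ)) ^ ν := by
  have hdeg (i) (_ : i ∈ Finset.univ) :
      (Chebyshev.T ℝ (k i)).natDegree < (k (Fin.last m)).toNat + 1 := by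
    have hnonneg : k 0 ≤ k i := hk.monotone (Fin.zero_le i)
    have hle : k i ≤ k (Fin.last m) := hk.monotone (Fin.le_last i)
    rw [Chebyshev.natDegree_T]
    lia
  exact generating_identity_general hdeg _ hr.ne' hρ.ne' _
end
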